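/- The union over all nonzero ξ ∈ ℝ³ of σ_pt(ξ) equals the set {λ ∈ ℂ : Im λ = 0 and (Re λ)² ≤ max(0, −N²)} ∪ {λ ∈ ℂ : Re λ = 0 and max(0, β₋) ≤ (Im λ)² ≤ β₊}. -/

import Mathlib

/-!
For `η ⊥ ξ`, the vector `η` is annihilated by the operator iff
`λ²η + 2λ Ω × η + N² (ĝ·η) ĝ` is a multiple of `ξ`. Since `ξ` always lies in the kernel, the rank
is below two iff such an `η ≠ 0` exists (`mem_sigmaPt_iff_exists`), that is, iff a bordered `4 × 4`
matrix is singular. Its determinant is `-λ² (λ²|ξ|² + q(ξ))`, where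
`q(ξ) = N² (|ξ|² - (ξ·ĝ)²) + 4 (ξ·Ω)²` (`bordered_det`, `mem_sigmaPt_iff`). Hence
the nonzero part of the union consists of the square roots of `-μ`, with `μ` ranging over the values
of `q` on the unit sphere.

In an orthonormal frame `ĝ, e, ĝ × e` with `Ω = bĝ + ce` (`exists_frame`), `q` is
`N² (y² + z²) + 4 (bx + cy)²`, and its restriction to the plane `z = 0` has characteristic
polynomial `(4b² - μ)(N² - μ) - 4c²μ`, whose roots are `β±`. A positive value `μ` of `q` makes this
polynomial nonpositive (`quad_nonpos`), and values are bounded below by `min(0, N²)`. Conversely,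
values in `[β₋, β₊]` are attained in the plane `z = 0` and values in `[N², 0]` in the plane `y = 0`,
because the binary form `q - μ|ξ|²` has a nontrivial real zero there (`exists_binary_zero`).
-/

open Matrix

noncomputable section

abbrev V3R : Type := Fin 3 → ℝ
abbrev V3C : Type := Fin 3 → ℂ

/-- Embedding of real 3-vectors into complex 3-vectors. -/
def toC (v : V3R) : V3C := fun i => (v i : ℂ)

/-- The Euclidean norm of a real 3-vector. -/
def nrm (v : V3R) : ℝ := Real.sqrt (v ⬝ᵥ v)

/-- The `ℂ`-linear functional `η ↦ v ⬝ᵥ η` (ℂ-bilinear dot product with `v`). -/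
def dotL (v : V3C) : V3C →ₗ[ℂ] ℂ where
  toFun η := v ⬝ᵥ η
  map_add' x y := by simp [dotProduct_add]
  map_smul' c x := by simp [dotProduct_smul]

/-- The projection `P_ξ^⊥ : ℂ³ → ℂ³`, `η ↦ η - |ξ|⁻² (ξ·η) ξ`. -/
def PperpL (ξ : V3R) : V3C →ₗ[ℂ] V3C :=
  LinearMap.id - ((((ξ ⬝ᵥ ξ : ℝ) : ℂ)⁻¹ • dotL (toC ξ)).smulRight (toC ξ))

/-- The map `η ↦ λ² P_ξ^⊥ η + 2λ P_ξ^⊥(Ω × P_ξ^⊥ η) + N² (ĝ · P_ξ^⊥ η) P_ξ^⊥ ĝ`,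
where the cross product is extended ℂ-bilinearly. -/
def Vop (Ω g : V3R) (N2 : ℝ) (ξ : V3R) (l : ℂ) : V3C →ₗ[ℂ] V3C :=
  l ^ 2 • PperpL ξ
    + (2 * l) • (PperpL ξ ∘ₗ (crossProduct (toC Ω) : V3C →ₗ[ℂ] V3C) ∘ₗ PperpL ξ)
    + (N2 : ℂ) • ((dotL (toC g) ∘ₗ PperpL ξ).smulRight (PperpL ξ (toC g)))

/-- `σ_pt(ξ)`: the set of `λ ∈ ℂ` for which the above map has rank strictly less than two. -/
def sigmaPt (Ω g : V3R) (N2 : ℝ) (ξ : V3R) : Set ℂ :=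
  {l : ℂ | LinearMap.rank (Vop Ω g N2 ξ l) < 2}


/-- `β₊ = ½(4|Ω|² + N² + √((N² + 4|Ω|²)² − 16(Ω·ĝ)² N²))`. -/
def betaP (Ω g : V3R) (N2 : ℝ) : ℝ :=
  (4 * (Ω ⬝ᵥ Ω) + N2 + Real.sqrt ((N2 + 4 * (Ω ⬝ᵥ Ω)) ^ 2 - 16 * (Ω ⬝ᵥ g) ^ 2 * N2)) / 2

/-- `β₋ = ½(4|Ω|² + N² − √((N² + 4|Ω|²)² − 16(Ω·ĝ)² N²))`. -/
def betaM (Ω g : V3R) (N2 : ℝ) : ℝ :=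
  (4 * (Ω ⬝ᵥ Ω) + N2 - Real.sqrt ((N2 + 4 * (Ω ⬝ᵥ Ω)) ^ 2 - 16 * (Ω ⬝ᵥ g) ^ 2 * N2)) / 2

/-! ### Reduction to a scalar equation -/

/-- The bordered matrix of the system `λ²η + 2λ Ω × η + N² (ĝ·η) ĝ + c ξ = 0`, `ξ·η = 0` in the
unknowns `(η, c)`. -/
def bordered (Ω g : V3R) (N2 : ℝ) (ξ : V3R) (l : ℂ) : Matrix (Fin 4) (Fin 4) ℂ :=
  !![l ^ 2 + N2 * g 0 * g 0, -(2 * l * Ω 2) + N2 * g 0 * g 1, 2 * l * Ω 1 + N2 * g 0 * g 2, ξ 0;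
     2 * l * Ω 2 + N2 * g 1 * g 0, l ^ 2 + N2 * g 1 * g 1, -(2 * l * Ω 0) + N2 * g 1 * g 2, ξ 1;
     -(2 * l * Ω 1) + N2 * g 2 * g 0, 2 * l * Ω 0 + N2 * g 2 * g 1, l ^ 2 + N2 * g 2 * g 2, ξ 2;
     ξ 0, ξ 1, ξ 2, 0]

lemma bordered_det (Ω g : V3R) (hg : g ⬝ᵥ g = 1) (N2 : ℝ) (ξ : V3R) (l : ℂ) :
    (bordered Ω g N2 ξ l).det =
      -(l ^ 2 * (l ^ 2 * (ξ ⬝ᵥ ξ : ℝ) +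
        ((N2 * (ξ ⬝ᵥ ξ - (ξ ⬝ᵥ g) ^ 2) + 4 * (ξ ⬝ᵥ Ω) ^ 2 : ℝ) : ℂ))) := by
  have hg' : (g 0 : ℂ) * g 0 + g 1 * g 1 + g 2 * g 2 = 1 := by
    have := congrArg (fun x : ℝ => (x : ℂ)) hg
    simpa [dotProduct, Fin.sum_univ_three] using this
  simp [bordered, Matrix.det_succ_row_zero, Fin.sum_univ_succ, dotProduct, Fin.succAbove,
    Matrix.submatrix_apply]
  linear_combination (-l ^ 2 * N2 * (ξ 0 * ξ 0 + ξ 1 * ξ 1 + ξ 2 * ξ 2)) * hg'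

lemma dot_self_pos {v : V3R} (hv : v ≠ 0) : 0 < v ⬝ᵥ v := by
  refine lt_of_le_of_ne ?_ fun h => hv (dotProduct_self_eq_zero.1 h.symm)
  simp only [dotProduct]
  exact Finset.sum_nonneg fun i _ => mul_self_nonneg _

lemma toC_dot (ξ : V3R) : toC ξ ⬝ᵥ toC ξ = ((ξ ⬝ᵥ ξ : ℝ) : ℂ) := by
  simp [toC, dotProduct]

lemma PperpL_apply (ξ : V3R) (η : V3C) :
    PperpL ξ η = η - ((((ξ ⬝ᵥ ξ : ℝ) : ℂ)⁻¹ * (toC ξ ⬝ᵥ η)) • toC ξ) := by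
  simp [PperpL, dotL]

lemma PperpL_self {ξ : V3R} (hξ : ξ ≠ 0) : PperpL ξ (toC ξ) = 0 := by
  have h : ((ξ ⬝ᵥ ξ : ℝ) : ℂ) ≠ 0 := by exact_mod_cast (dot_self_pos hξ).ne'
  rw [PperpL_apply, toC_dot, inv_mul_cancel₀ h, one_smul, sub_self]

/-- On `ξ^⊥`, the operator is the projection of an operator without inner projections. -/
lemma Vop_apply_of_perp (Ω g : V3R) (N2 : ℝ) (ξ : V3R) (l : ℂ) {η : V3C}
    (h : toC ξ ⬝ᵥ η = 0) :
    Vop Ω g N2 ξ l η = PperpL ξ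
      (l ^ 2 • η + (2 * l) • crossProduct (toC Ω) η + ((N2 : ℂ) * (toC g ⬝ᵥ η)) • toC g) := by
  have hP : PperpL ξ η = η := by simp [PperpL_apply, h]
  simp only [Vop, LinearMap.add_apply, LinearMap.smul_apply, LinearMap.comp_apply,
    LinearMap.smulRight_apply, hP, map_add, map_smul, smul_smul]
  rfl

/-- The rank is below two iff the kernel meets `ξ^⊥` nontrivially, since `ξ` itself always lies in
the kernel. -/
lemma mem_sigmaPt_iff_exists (Ω g : V3R) (N2 : ℝ) {ξ : V3R} (hξ : ξ ≠ 0) (l : ℂ) :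
    l ∈ sigmaPt Ω g N2 ξ ↔ ∃ η : V3C, η ≠ 0 ∧ toC ξ ⬝ᵥ η = 0 ∧ Vop Ω g N2 ξ l η = 0 := by
  have hpos : ((ξ ⬝ᵥ ξ : ℝ) : ℂ) ≠ 0 := by exact_mod_cast (dot_self_pos hξ).ne'
  have hself : Vop Ω g N2 ξ l (toC ξ) = 0 := by
    simp [Vop, PperpL_self hξ]
  have hrk := LinearMap.finrank_range_add_finrank_ker (Vop Ω g N2 ξ l)
  have hrk' := LinearMap.finrank_range_add_finrank_ker (dotL (toC ξ))
  have hle := Submodule.finrank_le (LinearMap.range (dotL (toC ξ)))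
  simp only [Module.finrank_fin_fun, Module.finrank_self] at hrk hrk' hle
  have hmem : l ∈ sigmaPt Ω g N2 ξ ↔
      Module.finrank ℂ (LinearMap.range (Vop Ω g N2 ξ l)) < 2 := by
    change LinearMap.rank _ < 2 ↔ _
    rw [LinearMap.rank, ← Module.finrank_eq_rank]
    exact_mod_cast Iff.rfl
  rw [hmem]
  constructor
  · intro hlt
    have hne : LinearMap.ker (Vop Ω g N2 ξ l) ⊓ LinearMap.ker (dotL (toC ξ)) ≠ ⊥ := by
      intro hbot
      have h1 := Submodule.finrank_sup_add_finrank_inf_eq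
        (LinearMap.ker (Vop Ω g N2 ξ l)) (LinearMap.ker (dotL (toC ξ)))
      have h2 := Submodule.finrank_le
        (LinearMap.ker (Vop Ω g N2 ξ l) ⊔ LinearMap.ker (dotL (toC ξ)))
      rw [hbot, finrank_bot] at h1
      simp only [Module.finrank_fin_fun] at h2
      omega
    obtain ⟨η, hη, hη0⟩ := Submodule.exists_mem_ne_zero_of_ne_bot hne
    exact ⟨η, hη0, hη.2, hη.1⟩
  · rintro ⟨η, hη0, hperp, hker⟩
    have hli : LinearIndependent ℂ ![toC ξ, η] := by
      rw [LinearIndependent.pair_iff]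
      intro s t hst
      have h1 := congrArg (fun v => toC ξ ⬝ᵥ v) hst
      simp only [dotProduct_add, dotProduct_smul, hperp, toC_dot, smul_eq_mul, mul_zero,
        add_zero, dotProduct_zero] at h1
      have hs : s = 0 := (mul_eq_zero.1 h1).resolve_right hpos
      subst hs
      rw [zero_smul, zero_add] at hst
      exact ⟨rfl, (smul_eq_zero.1 hst).resolve_right hη0⟩
    have hsp : Submodule.span ℂ (Set.range ![toC ξ, η]) ≤ LinearMap.ker (Vop Ω g N2 ξ l) := by
      rw [Submodule.span_le]
      rintro _ ⟨i, rfl⟩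
      fin_cases i
      · exact hself
      · exact hker
    have h1 := Submodule.finrank_mono hsp
    rw [finrank_span_eq_card hli, Fintype.card_fin] at h1
    omega

/-- `λ ∈ σ_pt(ξ)` iff the bordered matrix is singular; the unknown `c` is the coefficient of `ξ`
killed by the outer projection. -/
lemma mem_sigmaPt_iff (Ω g : V3R) (hg : g ⬝ᵥ g = 1) (N2 : ℝ) {ξ : V3R} (hξ : ξ ≠ 0) (l : ℂ) :
    l ∈ sigmaPt Ω g N2 ξ ↔ l = 0 ∨ l ^ 2 * (ξ ⬝ᵥ ξ : ℝ) +
        ((N2 * (ξ ⬝ᵥ ξ - (ξ ⬝ᵥ g) ^ 2) + 4 * (ξ ⬝ᵥ Ω) ^ 2 : ℝ) : ℂ) = 0 := by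
  have hdet : (l = 0 ∨ l ^ 2 * (ξ ⬝ᵥ ξ : ℝ) +
        ((N2 * (ξ ⬝ᵥ ξ - (ξ ⬝ᵥ g) ^ 2) + 4 * (ξ ⬝ᵥ Ω) ^ 2 : ℝ) : ℂ) = 0) ↔
      (bordered Ω g N2 ξ l).det = 0 := by
    rw [bordered_det Ω g hg, neg_eq_zero, mul_eq_zero, pow_eq_zero_iff two_ne_zero]
  rw [hdet, mem_sigmaPt_iff_exists Ω g N2 hξ, ← Matrix.exists_mulVec_eq_zero_iff]
  constructor
  · rintro ⟨η, hη0, hperp, hker⟩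
    rw [Vop_apply_of_perp Ω g N2 ξ l hperp, PperpL_apply] at hker
    set c : ℂ := ((ξ ⬝ᵥ ξ : ℝ) : ℂ)⁻¹ * (toC ξ ⬝ᵥ (l ^ 2 • η + (2 * l) • crossProduct (toC Ω) η
      + ((N2 : ℂ) * (toC g ⬝ᵥ η)) • toC g)) with hc
    clear_value c
    refine ⟨![η 0, η 1, η 2, -c], ?_, ?_⟩
    · intro h
      apply hη0
      funext i
      fin_cases i
      · exact congrFun h 0
      · exact congrFun h 1
      · exact congrFun h 2
    · have h0 := congrFun hker 0
      have h1 := congrFun hker 1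
      have h2 := congrFun hker 2
      simp [toC, cross_apply, dotProduct, Fin.sum_univ_three, vecHead, vecTail] at h0 h1 h2 hperp
      funext i
      fin_cases i <;>
        simp [bordered, mulVec, dotProduct, Fin.sum_univ_succ]
      · linear_combination h0
      · linear_combination h1
      · linear_combination h2
      · linear_combination hperp
  · rintro ⟨v, hv0, hv⟩
    have h0 := congrFun hv 0
    have h1 := congrFun hv 1
    have h2 := congrFun hv 2
    have h3 := congrFun hv 3
    simp [bordered, mulVec, dotProduct, Fin.sum_univ_succ] at h0 h1 h2 h3
    have hperp : toC ξ ⬝ᵥ ![v 0, v 1, v 2] = 0 := by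
      simp [toC, dotProduct, Fin.sum_univ_three]
      linear_combination h3
    refine ⟨![v 0, v 1, v 2], ?_, hperp, ?_⟩
    · intro h
      have e0 : v 0 = 0 := congrFun h 0
      have e1 : v 1 = 0 := congrFun h 1
      have e2 : v 2 = 0 := congrFun h 2
      simp [e0, e1, e2] at h0 h1 h2
      have e3 : v 3 = 0 := by
        by_contra h3
        apply hξ
        funext i
        fin_cases i
        · simpa [h3] using h0
        · simpa [h3] using h1
        · simpa [h3] using h2
      apply hv0
      funext i
      fin_cases i <;> assumption
    · have hx : l ^ 2 • ![v 0, v 1, v 2] + (2 * l) • crossProduct (toC Ω) ![v 0, v 1, v 2]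
          + ((N2 : ℂ) * (toC g ⬝ᵥ ![v 0, v 1, v 2])) • toC g = (-v 3) • toC ξ := by
        funext i
        fin_cases i <;> simp [toC, cross_apply, dotProduct, Fin.sum_univ_three]
        · linear_combination h0
        · linear_combination h1
        · linear_combination h2
      rw [Vop_apply_of_perp Ω g N2 ξ l hperp, hx, map_smul, PperpL_self hξ, smul_zero]

/-! ### The quadratic form in an adapted frame -/

/-- A frame adapted to `ĝ` and `Ω`: a unit vector `e ⊥ ĝ` with `Ω` in the span of `ĝ` and `e`. -/
lemma exists_frame (Ω g : V3R) (hg : g ⬝ᵥ g = 1) :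
    ∃ (e : V3R) (c : ℝ), e ⬝ᵥ e = 1 ∧ e ⬝ᵥ g = 0 ∧ Ω = (Ω ⬝ᵥ g) • g + c • e := by
  obtain ⟨v, c, hv0, hvg, hv⟩ : ∃ (v : V3R) (c : ℝ), v ≠ 0 ∧ v ⬝ᵥ g = 0 ∧
      Ω = (Ω ⬝ᵥ g) • g + c • v := by
    by_cases hw : Ω - (Ω ⬝ᵥ g) • g = 0
    · have hΩ : Ω = (Ω ⬝ᵥ g) • g := sub_eq_zero.1 hw
      by_cases h : g 0 = 0 ∧ g 1 = 0
      · refine ⟨![1, 0, 0], 0, fun h' => ?_, ?_, by rw [zero_smul, add_zero]; exact hΩ⟩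
        · simpa using congrFun h' 0
        · simp [dotProduct, Fin.sum_univ_three, h.1]
      · refine ⟨![g 1, -g 0, 0], 0, fun h' => h ⟨?_, ?_⟩, ?_,
          by rw [zero_smul, add_zero]; exact hΩ⟩
        · simpa using congrFun h' 1
        · simpa using congrFun h' 0
        · simp [dotProduct, Fin.sum_univ_three]
          ring
    · refine ⟨Ω - (Ω ⬝ᵥ g) • g, 1, hw, ?_, ?_⟩
      · rw [sub_dotProduct, smul_dotProduct, hg]
        simp
      · rw [one_smul, add_sub_cancel]
  have hpos := dot_self_pos hv0
  have hs : 0 < √(v ⬝ᵥ v) := Real.sqrt_pos.2 hpos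
  refine ⟨(√(v ⬝ᵥ v))⁻¹ • v, c * √(v ⬝ᵥ v), ?_, ?_, ?_⟩
  · rw [smul_dotProduct, dotProduct_smul, smul_eq_mul, smul_eq_mul]
    have := Real.mul_self_sqrt hpos.le
    field_simp
    nlinarith
  · rw [smul_dotProduct, hvg, smul_zero]
  · rw [smul_smul, mul_assoc, mul_inv_cancel₀ hs.ne', mul_one]
    exact hv

/-- Parseval for the orthonormal frame `g, e, g × e`. -/
lemma parseval {g e : V3R} (hg : g ⬝ᵥ g = 1) (he : e ⬝ᵥ e = 1) (heg : e ⬝ᵥ g = 0) (ξ : V3R) :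
    ξ ⬝ᵥ ξ = (ξ ⬝ᵥ g) ^ 2 + (ξ ⬝ᵥ e) ^ 2 + (ξ ⬝ᵥ crossProduct g e) ^ 2 := by
  -- the Gram determinant of `ξ, g, e` is the square of their triple product
  have gram : (ξ ⬝ᵥ crossProduct g e) ^ 2 =
      (ξ ⬝ᵥ ξ) * ((g ⬝ᵥ g) * (e ⬝ᵥ e) - (e ⬝ᵥ g) ^ 2)
      - (ξ ⬝ᵥ g) * ((ξ ⬝ᵥ g) * (e ⬝ᵥ e) - (e ⬝ᵥ g) * (ξ ⬝ᵥ e))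
      + (ξ ⬝ᵥ e) * ((ξ ⬝ᵥ g) * (e ⬝ᵥ g) - (g ⬝ᵥ g) * (ξ ⬝ᵥ e)) := by
    simp only [cross_apply, dotProduct, Fin.sum_univ_three, Matrix.cons_val]
    ring
  rw [gram, hg, he, heg]
  ring

/-- A real binary quadratic form with nonnegative discriminant has a nontrivial real zero. -/
lemma exists_binary_zero (A B C : ℝ) (h : A * C ≤ B ^ 2) :
    ∃ x y : ℝ, (x ≠ 0 ∨ y ≠ 0) ∧ A * x ^ 2 + 2 * B * x * y + C * y ^ 2 = 0 := by
  by_cases hA : A = 0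
  · exact ⟨1, 0, Or.inl one_ne_zero, by simp [hA]⟩
  · refine ⟨-B + √(B ^ 2 - A * C), A, Or.inr hA, ?_⟩
    have hs := Real.sq_sqrt (sub_nonneg.2 h)
    linear_combination A * hs

/-- The quadratic in `μ` with roots `β±`, written in the adapted frame (`b = Ω·ĝ`, `c = Ω·e`), is
nonpositive at every positive value `μ` of the form on the unit sphere: otherwise the form minus
`μ|ξ|²` would be definite. -/
lemma quad_nonpos {b c n x y z μ : ℝ} (hμ : 0 < μ) (hne : 0 < x ^ 2 + y ^ 2 + z ^ 2)
    (h : μ * (x ^ 2 + y ^ 2 + z ^ 2) = n * (y ^ 2 + z ^ 2) + 4 * (b * x + c * y) ^ 2) :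
    (4 * b ^ 2 - μ) * (n - μ) - 4 * c ^ 2 * μ ≤ 0 := by
  by_contra! hp
  have hc : 0 ≤ 4 * c ^ 2 * μ := by positivity
  -- completing the square in `x` after multiplying by the leading coefficient
  have key : ((4 * b ^ 2 - μ) * x + 4 * b * c * y) ^ 2
      + ((4 * b ^ 2 - μ) * (n - μ) - 4 * c ^ 2 * μ) * y ^ 2
      + ((4 * b ^ 2 - μ) * (n - μ)) * z ^ 2 = 0 := by
    linear_combination (-(4 * b ^ 2 - μ)) * h
  have hAC : 0 < (4 * b ^ 2 - μ) * (n - μ) := by linarith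
  have hA : 4 * b ^ 2 - μ ≠ 0 := fun h0 => by simp [h0] at hAC
  have t1 := sq_nonneg ((4 * b ^ 2 - μ) * x + 4 * b * c * y)
  have t2 := mul_nonneg hp.le (sq_nonneg y)
  have t3 := mul_nonneg hAC.le (sq_nonneg z)
  have hy : y = 0 := by
    have : ((4 * b ^ 2 - μ) * (n - μ) - 4 * c ^ 2 * μ) * y ^ 2 = 0 := by linarith
    simpa using (mul_eq_zero.1 this).resolve_left hp.ne'
  have hz : z = 0 := by
    have : ((4 * b ^ 2 - μ) * (n - μ)) * z ^ 2 = 0 := by linarith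
    simpa using (mul_eq_zero.1 this).resolve_left hAC.ne'
  have hx : x = 0 := by
    have : ((4 * b ^ 2 - μ) * x + 4 * b * c * y) ^ 2 = 0 := by linarith
    simpa [hy, hA] using this
  simp [hx, hy, hz] at hne

/-! ### The union of the point spectra -/

/-- The union over all nonzero `ξ ∈ ℝ³` of `σ_pt(ξ)` equals
`{λ : Im λ = 0, (Re λ)² ≤ max(0, −N²)} ∪ {λ : Re λ = 0, max(0,β₋) ≤ (Im λ)² ≤ β₊}`. -/
theorem statement1 (Ω g : V3R) (hg : g ⬝ᵥ g = 1) (N2 : ℝ) :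
    (⋃ (ξ : V3R) (_ : ξ ≠ 0), sigmaPt Ω g N2 ξ) =
      {l : ℂ | l.im = 0 ∧ l.re ^ 2 ≤ max 0 (-N2)} ∪
        {l : ℂ | l.re = 0 ∧ max 0 (betaM Ω g N2) ≤ l.im ^ 2 ∧ l.im ^ 2 ≤ betaP Ω g N2} := by
  obtain ⟨e, c, he, heg, hΩ⟩ := exists_frame Ω g hg
  set b : ℝ := Ω ⬝ᵥ g with hb
  clear_value b
  have hge : g ⬝ᵥ e = 0 := by rw [dotProduct_comm, heg]
  have hΩΩ : Ω ⬝ᵥ Ω = b ^ 2 + c ^ 2 := by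
    rw [hΩ]
    simp only [add_dotProduct, dotProduct_add, smul_dotProduct, dotProduct_smul, smul_eq_mul, hg,
      he, heg, hge]
    ring
  have hξΩ : ∀ ξ : V3R, ξ ⬝ᵥ Ω = b * (ξ ⬝ᵥ g) + c * (ξ ⬝ᵥ e) := by
    intro ξ
    rw [hΩ]
    simp [dotProduct_add, dotProduct_smul]
  have hpar := parseval hg he heg
  have hdisc : 0 ≤ (N2 + 4 * (b ^ 2 + c ^ 2)) ^ 2 - 16 * b ^ 2 * N2 := by
    nlinarith [sq_nonneg (N2 + 4 * c ^ 2 - 4 * b ^ 2), sq_nonneg (b * c)]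
  have hg0 : g ≠ 0 := by
    rintro rfl
    simp at hg
  have hgf : g ⬝ᵥ crossProduct g e = 0 := dot_self_cross g e
  have hef : e ⬝ᵥ crossProduct g e = 0 := dot_cross_self g e
  have hff : crossProduct g e ⬝ᵥ crossProduct g e = 1 := by
    rw [cross_dot_cross, hg, he, heg, hge]
    ring
  ext l
  simp only [Set.mem_iUnion, Set.mem_union, Set.mem_ofPred_eq, exists_prop, betaP, betaM, ← hb,
    hΩΩ]
  constructor
  · rintro ⟨ξ, hξ, hl⟩
    rw [mem_sigmaPt_iff Ω g hg N2 hξ] at hl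
    rcases hl with rfl | hl
    · left
      simp
    have hpos := dot_self_pos hξ
    have hre := congrArg Complex.re hl
    have him := congrArg Complex.im hl
    simp only [pow_two, Complex.add_re, Complex.add_im, Complex.mul_re, Complex.mul_im,
      Complex.ofReal_re, Complex.ofReal_im, Complex.zero_re, Complex.zero_im] at hre him
    have him' : (2 * (l.re * l.im)) * (ξ ⬝ᵥ ξ) = 0 := by linear_combination him
    have hprod : l.re * l.im = 0 := by
      have := (mul_eq_zero.1 him').resolve_right hpos.ne'
      linarith
    rw [hξΩ] at hre
    have hp := hpar ξ
    by_cases hl0 : l.im = 0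
    · left
      refine ⟨hl0, ?_⟩
      rw [hl0] at hre
      by_contra! hlt
      have h1 := (max_lt_iff.1 hlt).1
      have h2 := (max_lt_iff.1 hlt).2
      rw [hp] at hre hpos
      have hx := mul_nonneg h1.le (sq_nonneg (ξ ⬝ᵥ g))
      have hyz := mul_nonneg (by linarith : 0 ≤ l.re ^ 2 + N2)
        (by positivity : 0 ≤ (ξ ⬝ᵥ e) ^ 2 + (ξ ⬝ᵥ crossProduct g e) ^ 2)
      have hΩ2 := sq_nonneg (b * (ξ ⬝ᵥ g) + c * (ξ ⬝ᵥ e))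
      -- all three contributions are nonnegative with zero sum, so every coordinate vanishes
      have hsum : l.re ^ 2 * (ξ ⬝ᵥ g) ^ 2
          + (l.re ^ 2 + N2) * ((ξ ⬝ᵥ e) ^ 2 + (ξ ⬝ᵥ crossProduct g e) ^ 2)
          + 4 * (b * (ξ ⬝ᵥ g) + c * (ξ ⬝ᵥ e)) ^ 2 = 0 := by
        linear_combination hre
      have hx0 : l.re ^ 2 * (ξ ⬝ᵥ g) ^ 2 = 0 := by linarith
      have hyz0 : (l.re ^ 2 + N2) * ((ξ ⬝ᵥ e) ^ 2 + (ξ ⬝ᵥ crossProduct g e) ^ 2) = 0 := by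
        linarith
      have a1 := (mul_eq_zero.1 hx0).resolve_left h1.ne'
      have a2 := (mul_eq_zero.1 hyz0).resolve_left (by linarith)
      linarith
    · right
      have hr0 : l.re = 0 := (mul_eq_zero.1 hprod).resolve_right hl0
      rw [hr0] at hre
      have hμ : 0 < l.im ^ 2 := by positivity
      have hq := quad_nonpos (b := b) (c := c) (n := N2) (x := ξ ⬝ᵥ g) (y := ξ ⬝ᵥ e)
        (z := ξ ⬝ᵥ crossProduct g e) hμ (by rw [← hp]; exact hpos)
        (by linear_combination (-1 : ℝ) * hre + (N2 - l.im ^ 2) * hp)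
      have habs := Real.abs_le_sqrt (x := 2 * l.im ^ 2 - (4 * (b ^ 2 + c ^ 2) + N2))
        (y := (N2 + 4 * (b ^ 2 + c ^ 2)) ^ 2 - 16 * b ^ 2 * N2) (by nlinarith)
      rw [abs_le] at habs
      exact ⟨hr0, max_le hμ.le (by linarith), by linarith⟩
  · -- any real zero of the form minus `μ|ξ|²`, in frame coordinates, provides `ξ`
    have build : ∀ (x y z : ℝ), 0 < x ^ 2 + y ^ 2 + z ^ 2 → (∀ μ : ℝ, l ^ 2 = ((-μ : ℝ) : ℂ) →
        μ * (x ^ 2 + y ^ 2 + z ^ 2) = N2 * (y ^ 2 + z ^ 2) + 4 * (b * x + c * y) ^ 2 →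
        ∃ ξ : V3R, ξ ≠ 0 ∧ l ∈ sigmaPt Ω g N2 ξ) := by
      intro x y z hpos μ hlμ hμ
      have hfg : crossProduct g e ⬝ᵥ g = 0 := by rw [dotProduct_comm, hgf]
      have hfe : crossProduct g e ⬝ᵥ e = 0 := by rw [dotProduct_comm, hef]
      set ξ : V3R := x • g + y • e + z • crossProduct g e with hξdef
      have c1 : ξ ⬝ᵥ g = x := by
        simp [hξdef, add_dotProduct, smul_dotProduct, hg, heg, hfg]
      have c2 : ξ ⬝ᵥ e = y := by
        simp [hξdef, add_dotProduct, smul_dotProduct, he, hge, hfe]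
      have c3 : ξ ⬝ᵥ crossProduct g e = z := by
        simp [hξdef, add_dotProduct, smul_dotProduct, hgf, hef, hff]
      have hn := hpar ξ
      rw [c1, c2, c3] at hn
      have hξ : ξ ≠ 0 := by
        intro h0
        rw [h0, zero_dotProduct] at hn
        linarith
      refine ⟨ξ, hξ, (mem_sigmaPt_iff Ω g hg N2 hξ l).2 (Or.inr ?_)⟩
      rw [hξΩ, c1, c2, hn, hlμ, ← Complex.ofReal_mul, ← Complex.ofReal_add,
        Complex.ofReal_eq_zero]
      linear_combination (-1 : ℝ) * hμ
    rintro (⟨him, hre⟩ | ⟨hre, hlo, hhi⟩)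
    · have hl : l = (l.re : ℂ) := Complex.ext rfl (by simpa using him)
      by_cases hl0 : l = 0
      · exact ⟨g, hg0, (mem_sigmaPt_iff Ω g hg N2 hg0 l).2 (Or.inl hl0)⟩
      have hr0 : l.re ≠ 0 := fun h => hl0 (by rw [hl, h, Complex.ofReal_zero])
      have hrpos : 0 < l.re ^ 2 := by positivity
      have hN : l.re ^ 2 ≤ -N2 := (le_max_iff.1 hre).resolve_left (not_le.2 hrpos)
      have hA : 0 ≤ 4 * b ^ 2 + l.re ^ 2 := by positivity
      have hC : N2 + l.re ^ 2 ≤ 0 := by linarith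
      -- the form minus `μ|ξ|²` is indefinite or degenerate on the plane of `g` and `g × e`
      obtain ⟨x, z, hxz, hq⟩ := exists_binary_zero (4 * b ^ 2 + l.re ^ 2) 0 (N2 + l.re ^ 2)
        ((mul_nonpos_of_nonneg_of_nonpos hA hC).trans (sq_nonneg 0))
      refine build x 0 z ?_ (-l.re ^ 2) ?_ ?_
      · rcases hxz with h | h <;> positivity
      · rw [hl]
        simp
      · linear_combination (-1 : ℝ) * hq
    · have hl : l = (l.im : ℂ) * Complex.I := Complex.ext (by simp [hre]) (by simp)
      have hlo' := (max_le_iff.1 hlo).2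
      have hsq : (2 * l.im ^ 2 - (4 * (b ^ 2 + c ^ 2) + N2)) ^ 2 ≤
          (N2 + 4 * (b ^ 2 + c ^ 2)) ^ 2 - 16 * b ^ 2 * N2 := by
        rw [← Real.sq_sqrt hdisc]
        exact sq_le_sq' (by linarith) (by linarith)
      obtain ⟨x, y, hxy, hq⟩ := exists_binary_zero (4 * b ^ 2 - l.im ^ 2) (4 * b * c)
        (N2 + 4 * c ^ 2 - l.im ^ 2) (by nlinarith)
      refine build x y 0 ?_ (l.im ^ 2) ?_ ?_
      · rcases hxy with h | h <;> positivity
      · conv_lhs => rw [hl]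
        simp [mul_pow]
      · linear_combination (-1 : ℝ) * hq
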